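/- Let W : ℝ² → [0,∞) be C² with W(0)=0, D²W(0) = diag(2λ₁, 2λ₂) with 0 < λ₁ < λ₂ in suitable orthonormal coordinates. There exist η, ε, c, C > 0 such that for all R > 0 and all f ∈ H¹([−R,R],ℝ²) with f(−R) = a = (a₁,a₂), f(R) = b = (b₁,b₂), d(a,0) = d(b,0) = η, a₁ < 0 < b₁, and |a₂| ≤ ε|a₁|, |b₂| ≤ ε|b₁|, one has E(f,[−R,R]) ≥ 2η + c( min_{t∈[−R,R]} |f(t)|² + e^{−CR} ). -/

import Mathlib

open Real MeasureTheory Filter Topology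

/-- The degenerate geodesic distance associated to a nonnegative potential `W` on ℝ² ≅ ℂ. -/
noncomputable def degDist (W : ℂ → ℝ) (p q : ℂ) : ℝ :=
  sInf {c | ∃ γ : ℝ → ℂ, ContDiff ℝ 1 γ ∧ γ 0 = p ∧ γ 1 = q ∧
    c = ∫ t in (0:ℝ)..1, Real.sqrt 2 * Real.sqrt (W (γ t)) * ‖deriv γ t‖}

/-- The one-dimensional Allen–Cahn energy of `f` on `[a,b]`. -/
noncomputable def oneDEnergy (W : ℂ → ℝ) (f : ℝ → ℂ) (a b : ℝ) : ℝ :=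
  ∫ t in a..b, ((1 / 2) * ‖deriv f t‖ ^ 2 + W (f t))

/-!
Near the well `√2 √W` is close to the norm of `(m x, M y)`, where `m = √(2 λ₁) < M = √(2 λ₂)`. This
factor is compared with the metrics `k ‖z‖ |dz|`, which are flat in the coordinate `z²`: there an
arc from `z` to `w` has length at least `(k / 2) ‖w² - z²‖`.

A crossing curve starts in the sector `|y| ≤ ε |x|` and must leave it to reach the axis `x = 0`.
Outside the sector the conformal factor is at least `μ ‖z‖` up to a relative error, with `μ` the
quadratic mean of `m` and `M` for the weights `1` and `ε²`. From a point of the edge, the geodesic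
`((1 - t) x, (1 - t) ^ (M / m) y)` of the model metric reaches the well at the cost `(ν / 2) ‖z‖²`
with `ν` the arithmetic mean, and `ν < μ`. So going on to a point `w` of the axis costs more than
going to the well, by a multiple of `‖w‖²`. Doing this on both sides of the axis gives
length at least `2 η + q ‖f(τ)‖²` at a crossing time `τ`.

If `f(τ)` is close to the well, the energy exceeds the length instead: a curve whose energy is close
to its length moves at speed at most about `L ‖f‖`, so by Grönwall `‖f‖²` decays at most like
`exp (-C R)`.
-/

section DegLength

variable {E : Type*} [NormedAddCommGroup E] [NormedSpace ℝ E] {W : E → ℝ} {f g : ℝ → E}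
  {a b : ℝ}

/-- The length of the curve `f` on `[a, b]` in the degenerate metric with conformal factor `√2 √W`.
Its infimum over the curves joining two points of the plane is `degDist W`. -/
noncomputable def degLength (W : E → ℝ) (f : ℝ → E) (a b : ℝ) : ℝ :=
  ∫ t in a..b, √2 * √(W (f t)) * ‖deriv f t‖

theorem continuous_degLength_integrand (hW : Continuous W) (hf : ContDiff ℝ 1 f) :
    Continuous fun t => √2 * √(W (f t)) * ‖deriv f t‖ := by
  have := hf.continuous
  have := hf.continuous_deriv le_rfl
  fun_prop

theorem degLength_nonneg (hab : a ≤ b) : 0 ≤ degLength W f a b :=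
  intervalIntegral.integral_nonneg hab fun _ _ => by positivity

theorem degLength_add (hW : Continuous W) (hf : ContDiff ℝ 1 f) (a b c : ℝ) :
    degLength W f a b + degLength W f b c = degLength W f a c :=
  have hc := continuous_degLength_integrand hW hf
  intervalIntegral.integral_add_adjacent_intervals (hc.intervalIntegrable _ _)
    (hc.intervalIntegrable _ _)

theorem degLength_le_of_Icc_subset (hW : Continuous W) (hf : ContDiff ℝ 1 f) {s t : ℝ}
    (has : a ≤ s) (htb : t ≤ b) : degLength W f s t ≤ degLength W f a b := by
  linarith [degLength_add hW hf a s b, degLength_add hW hf s t b,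
    degLength_nonneg (W := W) (f := f) has, degLength_nonneg (W := W) (f := f) htb]

theorem degLength_congr (hab : a ≤ b) (hfg : Set.EqOn f g (Set.Ioo a b)) :
    degLength W f a b = degLength W g a b := by
  simp only [degLength, intervalIntegral.integral_of_le hab, integral_Ioc_eq_integral_Ioo]
  refine setIntegral_congr_fun measurableSet_Ioo fun t ht => ?_
  have hfg' : f =ᶠ[𝓝 t] g := hfg.eventuallyEq_of_mem (isOpen_Ioo.mem_nhds ht)
  simp only [hfg'.deriv_eq, hfg ht]

theorem degLength_comp_neg : degLength W (fun t => f (-t)) a b = degLength W f (-b) (-a) := by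
  simp only [degLength, deriv_comp_neg, norm_neg]
  exact intervalIntegral.integral_comp_neg fun t => √2 * √(W (f t)) * ‖deriv f t‖

theorem degLength_comp (hW : Continuous W) (hf : ContDiff ℝ 1 f) {h : ℝ → ℝ}
    (hh : ContDiff ℝ 1 h) (hmono : Monotone h) (a b : ℝ) :
    degLength W (f ∘ h) a b = degLength W f (h a) (h b) := by
  have hh' (t : ℝ) : HasDerivAt h (deriv h t) t :=
    (hh.differentiable one_ne_zero t).hasDerivAt
  have hf' (t : ℝ) : HasDerivAt f (deriv f t) t :=
    (hf.differentiable one_ne_zero t).hasDerivAt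
  unfold degLength
  rw [← intervalIntegral.integral_comp_mul_deriv (fun t _ => hh' t)
    (hh.continuous_deriv le_rfl).continuousOn (continuous_degLength_integrand hW hf)]
  congr 1 with t
  rw [((hf' (h t)).scomp t (hh' t)).deriv, norm_smul, Real.norm_of_nonneg hmono.deriv_nonneg]
  simp only [Function.comp_apply]
  ring

/- Both pieces are slowed down to a stop at the junction, so that the concatenation is `C¹`. -/
theorem exists_degLength_eq_add (hW : Continuous W) (hf : ContDiff ℝ 1 f) (hg : ContDiff ℝ 1 g)
    (hfg : f 1 = g 0) : ∃ γ : ℝ → E, ContDiff ℝ 1 γ ∧ γ 0 = f 0 ∧ γ 1 = g 1 ∧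
      degLength W γ 0 1 = degLength W f 0 1 + degLength W g 0 1 := by
  let φ (t : ℝ) : ℝ := smoothTransition (2 * t)
  let ψ (t : ℝ) : ℝ := smoothTransition (2 * t - 1)
  have hσ : ContDiff ℝ 1 smoothTransition := smoothTransition.contDiff
  have hφ : ContDiff ℝ 1 φ := hσ.comp (by fun_prop)
  have hψ : ContDiff ℝ 1 ψ := hσ.comp (by fun_prop)
  have hφ_mono : Monotone φ := smoothTransition.monotone.comp fun s t hst => by linarith
  have hψ_mono : Monotone ψ := smoothTransition.monotone.comp fun s t hst => by linarith
  have hφ_one {t : ℝ} (ht : 1 / 2 ≤ t) : φ t = 1 := smoothTransition.one_of_one_le (by linarith)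
  have hψ_zero {t : ℝ} (ht : t ≤ 1 / 2) : ψ t = 0 := smoothTransition.zero_of_nonpos (by linarith)
  have hφ_zero : φ 0 = 0 := smoothTransition.zero_of_nonpos (by norm_num)
  have hψ_one : ψ 1 = 1 := smoothTransition.one_of_one_le (by norm_num)
  let γ (t : ℝ) : E := f (φ t) + g (ψ t) - g 0
  have hγ : ContDiff ℝ 1 γ := ((hf.comp hφ).add (hg.comp hψ)).sub contDiff_const
  have hγ_left {t : ℝ} (ht : t ≤ 1 / 2) : γ t = (f ∘ φ) t := by simp [γ, hψ_zero ht]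
  have hγ_right {t : ℝ} (ht : 1 / 2 ≤ t) : γ t = (g ∘ ψ) t := by simp [γ, hφ_one ht, hfg]
  refine ⟨γ, hγ, ?_, ?_, ?_⟩
  · rw [hγ_left (by norm_num), Function.comp_apply, hφ_zero]
  · rw [hγ_right (by norm_num), Function.comp_apply, hψ_one]
  · rw [← degLength_add hW hγ 0 (1 / 2) 1,
      degLength_congr (by norm_num) fun t ht => hγ_left ht.2.le,
      degLength_congr (by norm_num) fun t ht => hγ_right ht.1.le, degLength_comp hW hf hφ hφ_mono,
      degLength_comp hW hg hψ hψ_mono, hφ_zero, hφ_one le_rfl, hψ_zero le_rfl, hψ_one]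

end DegLength

section DegDist

variable {W : ℂ → ℝ} {f : ℝ → ℂ} {p q : ℂ} {a b : ℝ}

theorem degDist_le_degLength_zero_one (hf : ContDiff ℝ 1 f) :
    degDist W (f 0) (f 1) ≤ degLength W f 0 1 := by
  refine csInf_le ⟨0, ?_⟩ ⟨f, hf, rfl, rfl, rfl⟩
  rintro _ ⟨γ, -, -, -, rfl⟩
  exact degLength_nonneg zero_le_one

theorem le_degDist {m : ℝ}
    (h : ∀ γ : ℝ → ℂ, ContDiff ℝ 1 γ → γ 0 = p → γ 1 = q → m ≤ degLength W γ 0 1) :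
    m ≤ degDist W p q := by
  refine le_csInf ⟨_, fun t => p + t • (q - p), by fun_prop, by simp, by simp, rfl⟩ ?_
  rintro _ ⟨γ, hγ, h0, h1, rfl⟩
  exact h γ hγ h0 h1

theorem degDist_le_degLength (hW : Continuous W) (hf : ContDiff ℝ 1 f) (hab : a ≤ b) :
    degDist W (f a) (f b) ≤ degLength W f a b := by
  let h (t : ℝ) : ℝ := a + (b - a) * t
  have hh : ContDiff ℝ 1 h := by fun_prop
  have hmono : Monotone h := fun s t hst => by
    simp only [h]
    have := sub_nonneg.2 hab
    gcongr
  simpa [degLength_comp hW hf hh hmono, h] using degDist_le_degLength_zero_one (W := W) (hf.comp hh)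

theorem degDist_triangle (hW : Continuous W) (p z q : ℂ) :
    degDist W p q ≤ degDist W p z + degDist W z q := by
  rw [← sub_le_iff_le_add]
  refine le_degDist fun f hf hf0 hf1 => ?_
  rw [sub_le_comm]
  refine le_degDist fun g hg hg0 hg1 => ?_
  obtain ⟨γ, hγ, hγ0, hγ1, hlen⟩ := exists_degLength_eq_add hW hf hg (hf1.trans hg0.symm)
  have := degDist_le_degLength_zero_one (W := W) hγ
  rw [hγ0, hγ1, hf0, hg1] at this
  linarith

end DegDist

section Energy

variable {W : ℂ → ℝ} {f : ℝ → ℂ} {a b : ℝ}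

theorem sqrt_two_mul_sqrt_sq {x : ℝ} (hx : 0 ≤ x) : (√2 * √x) ^ 2 = 2 * x := by
  rw [mul_pow, sq_sqrt zero_le_two, sq_sqrt hx]

theorem oneDEnergy_sub_degLength (hWc : Continuous W) (hW : ∀ z, 0 ≤ W z) (hf : ContDiff ℝ 1 f)
    (a b : ℝ) : oneDEnergy W f a b - degLength W f a b =
      ∫ t in a..b, (1 / 2) * (‖deriv f t‖ - √2 * √(W (f t))) ^ 2 := by
  have := hf.continuous
  have := hf.continuous_deriv le_rfl
  have hE : Continuous fun t => (1 / 2) * ‖deriv f t‖ ^ 2 + W (f t) := by fun_prop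
  rw [oneDEnergy, degLength, ← intervalIntegral.integral_sub (hE.intervalIntegrable _ _)
    ((continuous_degLength_integrand hWc hf).intervalIntegrable _ _)]
  congr 1 with t
  linear_combination -(1 / 2) * sqrt_two_mul_sqrt_sq (hW (f t))

theorem degLength_le_oneDEnergy (hWc : Continuous W) (hW : ∀ z, 0 ≤ W z) (hf : ContDiff ℝ 1 f)
    (hab : a ≤ b) : degLength W f a b ≤ oneDEnergy W f a b := by
  rw [← sub_nonneg, oneDEnergy_sub_degLength hWc hW hf]
  exact intervalIntegral.integral_nonneg hab fun _ _ => by positivity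

theorem exp_neg_mul_le_add_integral {u u' φ : ℝ → ℝ} {K : ℝ} (hK : 0 ≤ K) (hab : a ≤ b)
    (hu : ∀ t, HasDerivAt u (u' t) t) (hφ : Continuous φ) (hφ0 : ∀ t, 0 ≤ φ t)
    (hu' : ∀ t ∈ Set.Ioo a b, -(K * u t + φ t) ≤ u' t) :
    exp (-(K * (b - a))) * u a ≤ u b + ∫ t in a..b, φ t := by
  have hderiv (t : ℝ) : HasDerivAt (fun s => -(exp (-(K * (b - s))) * u s))
      (-(exp (-(K * (b - t))) * (K * u t + u' t))) t := by
    have hexp : HasDerivAt (fun s => exp (-(K * (b - s)))) (exp (-(K * (b - t))) * K) t := by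
      have := (((hasDerivAt_id t).const_sub b).const_mul K).neg.exp
      simpa using this
    refine (hexp.mul (hu t)).neg.congr_deriv ?_
    ring
  have hmono := intervalIntegral.sub_le_integral_of_hasDeriv_right_of_le hab
    (fun t _ => (hderiv t).continuousAt.continuousWithinAt)
    (fun t _ => (hderiv t).hasDerivWithinAt) hφ.integrableOn_Icc fun t ht => ?_
  · simp only [sub_self, mul_zero, neg_zero, exp_zero, one_mul] at hmono
    linarith
  · have hexp_le : exp (-(K * (b - t))) ≤ 1 :=
      exp_le_one_iff.2 (neg_nonpos.2 (mul_nonneg hK (sub_nonneg.2 ht.2.le)))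
    nlinarith [hu' t ht, hφ0 t, exp_pos (-(K * (b - t)))]

/- A curve staying close to the well moves slowly if its energy is close to its length. -/
theorem exp_neg_mul_norm_sq_le (hWc : Continuous W) (hW : ∀ z, 0 ≤ W z) (hf : ContDiff ℝ 1 f)
    {L t : ℝ} (hL : 0 < L) (ht : t ∈ Set.Icc a b)
    (hWL : ∀ s ∈ Set.Icc a b, √2 * √(W (f s)) ≤ L * ‖f s‖) :
    exp (-(3 * L * (b - a))) * ‖f a‖ ^ 2 ≤
      ‖f t‖ ^ 2 + 2 / L * (oneDEnergy W f a b - degLength W f a b) := by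
  let g (s : ℝ) : ℝ := (1 / 2) * (‖deriv f s‖ - √2 * √(W (f s))) ^ 2
  have hg : Continuous g := by
    have := hf.continuous
    have := hf.continuous_deriv le_rfl
    fun_prop
  have hg0 (s : ℝ) : 0 ≤ g s := by positivity
  have hderiv (s : ℝ) : HasDerivAt (fun s => ‖f s‖ ^ 2) (2 * inner ℝ (f s) (deriv f s)) s :=
    (hf.differentiable one_ne_zero s).hasDerivAt.norm_sq
  have hslow : ∀ s ∈ Set.Ioo a t,
      -(3 * L * ‖f s‖ ^ 2 + 2 / L * g s) ≤ 2 * inner ℝ (f s) (deriv f s) := fun s hs => by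
    have hinner := neg_le_of_abs_le (abs_real_inner_le_norm (f s) (deriv f s))
    have hdens := hWL s ⟨hs.1.le, hs.2.le.trans ht.2⟩
    set d := ‖deriv f s‖ - √2 * √(W (f s)) with hd
    -- AM-GM: `2 ‖f‖ d ≤ L ‖f‖² + d² / L`
    have hamgm : 2 * ‖f s‖ * d ≤ L * ‖f s‖ ^ 2 + 2 / L * g s := by
      have : L * ‖f s‖ ^ 2 + 2 / L * g s - 2 * ‖f s‖ * d = (L * ‖f s‖ - d) ^ 2 / L := by
        simp only [g, ← hd]
        field_simp
        ring
      linarith [div_nonneg (sq_nonneg (L * ‖f s‖ - d)) hL.le]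
    nlinarith [mul_le_mul_of_nonneg_left hdens (norm_nonneg (f s))]
  calc exp (-(3 * L * (b - a))) * ‖f a‖ ^ 2
      ≤ exp (-(3 * L * (t - a))) * ‖f a‖ ^ 2 := by gcongr; exact ht.2
    _ ≤ ‖f t‖ ^ 2 + ∫ s in a..t, 2 / L * g s :=
        exp_neg_mul_le_add_integral (by positivity) ht.1 hderiv (by fun_prop)
          (fun s => mul_nonneg (by positivity) (hg0 s)) hslow
    _ ≤ ‖f t‖ ^ 2 + ∫ s in a..b, 2 / L * g s := by
        gcongr
        exact intervalIntegral.integral_mono_interval le_rfl ht.1 ht.2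
          (Eventually.of_forall fun s => mul_nonneg (by positivity) (hg0 s))
          ((hg.const_mul _).intervalIntegrable _ _)
    _ = ‖f t‖ ^ 2 + 2 / L * (oneDEnergy W f a b - degLength W f a b) := by
        rw [intervalIntegral.integral_const_mul, oneDEnergy_sub_degLength hWc hW hf]

end Energy

section Squaring

theorem exists_eq_zero_and_forall_pos {h : ℝ → ℝ} {a b : ℝ} (hab : a ≤ b)
    (hh : ContinuousOn h (Set.Icc a b)) (ha : h a ≤ 0) (hb : 0 ≤ h b) :
    ∃ s ∈ Set.Icc a b, h s = 0 ∧ ∀ t ∈ Set.Ioo s b, 0 < h t := by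
  have hclosed : IsClosed (Set.Icc a b ∩ {t | h t ≤ 0}) :=
    hh.preimage_isClosed_of_isClosed isClosed_Icc isClosed_Iic
  obtain ⟨s, ⟨hs, hs0⟩, hmax⟩ := (isCompact_Icc.of_isClosed_subset hclosed
    Set.inter_subset_left).exists_isGreatest ⟨a, Set.left_mem_Icc.2 hab, ha⟩
  obtain ⟨t, ht, ht0⟩ := intermediate_value_Icc hs.2 (hh.mono (Set.Icc_subset_Icc_left hs.1))
    ⟨hs0, hb⟩
  have hts : t ≤ s := hmax ⟨⟨hs.1.trans ht.1, ht.2⟩, ht0.le⟩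
  refine ⟨s, hs, le_antisymm ht.1 hts ▸ ht0, fun t ht => ?_⟩
  by_contra! hcon
  exact ht.1.not_ge (hmax ⟨⟨hs.1.trans ht.1.le, ht.2.le⟩, hcon⟩)

variable {W : ℂ → ℝ} {f : ℝ → ℂ} {z : ℂ} {a b k r : ℝ}

/- Squaring flattens the cone: `‖f‖ ‖f'‖` is half the speed of `f ^ 2`. -/
theorem half_mul_norm_sq_sub_sq_le_degLength (hW : Continuous W) (hf : ContDiff ℝ 1 f)
    (hab : a ≤ b) (hk : 0 ≤ k)
    (hWk : ∀ t ∈ Set.Ioo a b, k * ‖f t‖ ≤ √2 * √(W (f t))) :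
    k / 2 * ‖f b ^ 2 - f a ^ 2‖ ≤ degLength W f a b := by
  have hderiv (t : ℝ) : HasDerivAt (fun s => (k / 2) • f s ^ 2)
      ((k / 2) • (2 * f t * deriv f t)) t := by
    simpa using ((hf.differentiable one_ne_zero t).hasDerivAt.fun_pow 2).fun_const_smul (k / 2)
  have hspeed (t : ℝ) (ht : t ∈ Set.Ioo a b) : ‖deriv (fun s => (k / 2) • f s ^ 2) t‖ ≤
      √2 * √(W (f t)) * ‖deriv f t‖ := by
    calc ‖deriv (fun s => (k / 2) • f s ^ 2) t‖ = k * ‖f t‖ * ‖deriv f t‖ := by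
          rw [(hderiv t).deriv, norm_smul, norm_mul, norm_mul, Real.norm_of_nonneg (by positivity),
            Complex.norm_ofNat]
          ring
      _ ≤ √2 * √(W (f t)) * ‖deriv f t‖ :=
          mul_le_mul_of_nonneg_right (hWk t ht) (norm_nonneg _)
  have := norm_sub_le_integral_of_norm_deriv_le_of_le hab
    (fun t _ => (hderiv t).continuousAt.continuousWithinAt)
    (fun t _ => (hderiv t).differentiableAt.differentiableWithinAt)
    (Eventually.of_forall hspeed)
    ((continuous_degLength_integrand hW hf).intervalIntegrable a b)
  rwa [← smul_sub, norm_smul, Real.norm_of_nonneg (by positivity)] at this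

theorem half_mul_sq_sub_norm_sq_le_degLength (hW : Continuous W) (hf : ContDiff ℝ 1 f)
    (hab : a ≤ b) (hk : 0 ≤ k) (hWk : ∀ z, ‖z‖ ≤ r → k * ‖z‖ ≤ √2 * √(W z))
    (ha : r ≤ ‖f a‖) (hb : ‖f b‖ ≤ r) :
    k / 2 * (r ^ 2 - ‖f b‖ ^ 2) ≤ degLength W f a b := by
  obtain ⟨s, hs, hfs, hpos⟩ := exists_eq_zero_and_forall_pos (h := fun t => r - ‖f t‖) hab
    (continuous_const.sub hf.continuous.norm).continuousOn (sub_nonpos.2 ha) (sub_nonneg.2 hb)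
  calc k / 2 * (r ^ 2 - ‖f b‖ ^ 2) = k / 2 * (‖f s ^ 2‖ - ‖f b ^ 2‖) := by
        rw [norm_pow, norm_pow, ← sub_eq_zero.1 hfs]
    _ ≤ k / 2 * ‖f b ^ 2 - f s ^ 2‖ := by
        gcongr
        rw [norm_sub_rev]
        exact norm_sub_norm_le _ _
    _ ≤ degLength W f s b := half_mul_norm_sq_sub_sq_le_degLength hW hf hs.2 hk fun t ht =>
        hWk _ (sub_pos.1 (hpos t ht)).le
    _ ≤ degLength W f a b := degLength_le_of_Icc_subset hW hf hs.1 le_rfl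

theorem half_mul_sq_le_degDist_zero (hW : Continuous W) (hk : 0 ≤ k) (hr : 0 ≤ r)
    (hWk : ∀ z, ‖z‖ ≤ r → k * ‖z‖ ≤ √2 * √(W z)) (hz : r ≤ ‖z‖) :
    k / 2 * r ^ 2 ≤ degDist W z 0 := by
  refine le_degDist fun f hf hf0 hf1 => ?_
  simpa [hf1] using half_mul_sq_sub_norm_sq_le_degLength hW hf zero_le_one hk hWk
    (hz.trans_eq (by rw [hf0])) (by simpa [hf1] using hr)

theorem norm_sq_eq_re_sq_add_im_sq (z : ℂ) : ‖z‖ ^ 2 = z.re ^ 2 + z.im ^ 2 := by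
  rw [Complex.sq_norm, Complex.normSq_apply]
  ring

theorem norm_sq_add_mul_norm_sq_le_norm_sq_sub_sq {z w : ℂ} {θ : ℝ} (hθ : 0 ≤ θ) (hθ1 : θ ≤ 1)
    (hw : w.re = 0) (hz : θ * ‖z‖ ^ 2 ≤ z.re ^ 2 - z.im ^ 2) :
    ‖z‖ ^ 2 + θ * ‖w‖ ^ 2 ≤ ‖w ^ 2 - z ^ 2‖ := by
  refine le_of_sq_le_sq ?_ (norm_nonneg _)
  have hnorm : ‖w ^ 2 - z ^ 2‖ ^ 2 =
      (‖z‖ ^ 2) ^ 2 + 2 * ‖w‖ ^ 2 * (z.re ^ 2 - z.im ^ 2) + (‖w‖ ^ 2) ^ 2 := by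
    rw [norm_sq_eq_re_sq_add_im_sq, norm_sq_eq_re_sq_add_im_sq z, norm_sq_eq_re_sq_add_im_sq w]
    simp only [pow_two, Complex.sub_re, Complex.sub_im, Complex.mul_re, Complex.mul_im, hw]
    ring
  rw [hnorm]
  nlinarith [mul_le_mul_of_nonneg_left hz (sq_nonneg ‖w‖), sq_nonneg (‖w‖ ^ 2),
    mul_le_mul_of_nonneg_right (pow_le_one₀ (n := 2) hθ hθ1) (sq_nonneg (‖w‖ ^ 2))]

end Squaring

section ModelGeodesic

variable {m M p ε A t : ℝ} {W : ℂ → ℝ} {f : ℝ → ℂ} {z : ℂ}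

/-- The diagonal linear map with eigenvalues `m` and `M`. For `m = √(2 λ₁)` and `M = √(2 λ₂)` its
norm at `z` is the conformal factor `√2 √Q` of the model potential `Q z = λ₁ x² + λ₂ y²`. -/
def stretch (m M : ℝ) (z : ℂ) : ℂ := ⟨m * z.re, M * z.im⟩

theorem norm_stretch_sq (m M : ℝ) (z : ℂ) :
    ‖stretch m M z‖ ^ 2 = m ^ 2 * z.re ^ 2 + M ^ 2 * z.im ^ 2 := by
  rw [norm_sq_eq_re_sq_add_im_sq, stretch, mul_pow, mul_pow]

theorem mul_norm_le_norm_stretch (hm : 0 ≤ m) (hmM : m ≤ M) (z : ℂ) :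
    m * ‖z‖ ≤ ‖stretch m M z‖ := by
  refine le_of_sq_le_sq ?_ (norm_nonneg _)
  rw [mul_pow, norm_stretch_sq, norm_sq_eq_re_sq_add_im_sq, mul_add]
  gcongr

theorem norm_stretch_le_mul_norm (hm : 0 ≤ m) (hmM : m ≤ M) (z : ℂ) :
    ‖stretch m M z‖ ≤ M * ‖z‖ := by
  refine le_of_sq_le_sq ?_ (mul_nonneg (hm.trans hmM) (norm_nonneg _))
  rw [mul_pow, norm_stretch_sq, norm_sq_eq_re_sq_add_im_sq, mul_add]
  gcongr

theorem sqrt_mul_norm_le_norm_stretch (hm : 0 ≤ m) (hmM : m ≤ M) (hε : 0 ≤ ε)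
    (hz : ε * |z.re| ≤ |z.im|) :
    √((m ^ 2 + M ^ 2 * ε ^ 2) / (1 + ε ^ 2)) * ‖z‖ ≤ ‖stretch m M z‖ := by
  refine le_of_sq_le_sq ?_ (norm_nonneg _)
  have hz_sq : ε ^ 2 * z.re ^ 2 ≤ z.im ^ 2 := by
    rw [← sq_abs z.re, ← sq_abs z.im, ← mul_pow]
    gcongr
  have hmM_sq : 0 ≤ M ^ 2 - m ^ 2 := sub_nonneg.2 (by gcongr)
  rw [mul_pow, sq_sqrt (by positivity), norm_stretch_sq, norm_sq_eq_re_sq_add_im_sq,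
    div_mul_eq_mul_div, div_le_iff₀ (by positivity)]
  nlinarith [mul_le_mul_of_nonneg_left hz_sq hmM_sq]

theorem mul_re_sq_add_mul_im_sq_eq_of_abs_im_eq (m M : ℝ) (hz : |z.im| = ε * |z.re|) :
    m * z.re ^ 2 + M * z.im ^ 2 = (m + M * ε ^ 2) / (1 + ε ^ 2) * ‖z‖ ^ 2 := by
  have him : z.im ^ 2 = ε ^ 2 * z.re ^ 2 := by rw [← sq_abs, hz, mul_pow, sq_abs]
  rw [norm_sq_eq_re_sq_add_im_sq, him]
  field_simp

/- The weights are those of the points with `|y| = ε |x|`. -/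
theorem weighted_mean_lt_sqrt_weighted_mean_sq (hm : 0 < m) (hmM : m < M) (hε : 0 < ε) :
    (m + M * ε ^ 2) / (1 + ε ^ 2) < √((m ^ 2 + M ^ 2 * ε ^ 2) / (1 + ε ^ 2)) := by
  have hM : 0 < M := hm.trans hmM
  rw [Real.lt_sqrt (by positivity), div_pow, div_lt_div_iff₀ (by positivity) (by positivity),
    ← sub_pos]
  have hdiff : (m ^ 2 + M ^ 2 * ε ^ 2) * (1 + ε ^ 2) ^ 2 - (m + M * ε ^ 2) ^ 2 * (1 + ε ^ 2) =
      (1 + ε ^ 2) * (ε * (M - m)) ^ 2 := by ring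
  rw [hdiff]
  have := sub_pos.2 hmM
  positivity

/-- The curve `t ↦ ((1 - t) x, (1 - t) ^ p y)`, which for `p = M / m` is the geodesic from
`z = (x, y)` to `0` of the degenerate metric with conformal factor `‖stretch m M ·‖`. -/
noncomputable def powerPath (p : ℝ) (z : ℂ) (t : ℝ) : ℂ :=
  (1 - t) • (z.re : ℂ) + (1 - t) ^ p • (z.im * Complex.I)

theorem re_powerPath (p : ℝ) (z : ℂ) (t : ℝ) : (powerPath p z t).re = (1 - t) * z.re := by
  simp [powerPath]

theorem im_powerPath (p : ℝ) (z : ℂ) (t : ℝ) : (powerPath p z t).im = (1 - t) ^ p * z.im := by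
  simp [powerPath]

theorem powerPath_zero (p : ℝ) (z : ℂ) : powerPath p z 0 = z := by
  simp [powerPath]

theorem powerPath_one (hp : p ≠ 0) (z : ℂ) : powerPath p z 1 = 0 := by
  simp [powerPath, zero_rpow hp]

theorem norm_powerPath_le (hp : 0 ≤ p) (ht : t ∈ Set.Icc 0 1) (z : ℂ) :
    ‖powerPath p z t‖ ≤ ‖z‖ := by
  have ht0 : 0 ≤ 1 - t := sub_nonneg.2 ht.2
  have ht1 : 1 - t ≤ 1 := sub_le_self 1 ht.1
  refine le_of_sq_le_sq ?_ (norm_nonneg _)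
  rw [norm_sq_eq_re_sq_add_im_sq, norm_sq_eq_re_sq_add_im_sq, re_powerPath, im_powerPath,
    mul_pow, mul_pow]
  gcongr
  · exact mul_le_of_le_one_left (sq_nonneg _) (pow_le_one₀ ht0 ht1)
  · exact mul_le_of_le_one_left (sq_nonneg _)
      (pow_le_one₀ (rpow_nonneg ht0 p) (rpow_le_one ht0 ht1 hp))

theorem contDiff_powerPath (hp : 1 ≤ p) (z : ℂ) : ContDiff ℝ 1 (powerPath p z) := by
  have hrpow : ContDiff ℝ 1 fun t : ℝ => (1 - t) ^ p :=
    (contDiff_rpow_const_of_le (n := 1) (by simpa using hp)).comp (by fun_prop)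
  unfold powerPath
  fun_prop

theorem deriv_powerPath (hp : 1 ≤ p) (z : ℂ) (t : ℝ) : deriv (powerPath p z) t =
    (-1 : ℝ) • (z.re : ℂ) + (-1 * p * (1 - t) ^ (p - 1)) • (z.im * Complex.I) := by
  have hsub : HasDerivAt (fun s : ℝ => 1 - s) (-1) t := (hasDerivAt_id t).const_sub 1
  exact ((hsub.smul_const _).add ((hsub.rpow_const (Or.inr hp)).smul_const _)).deriv

theorem re_deriv_powerPath (hp : 1 ≤ p) (z : ℂ) (t : ℝ) :
    (deriv (powerPath p z) t).re = -z.re := by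
  simp [deriv_powerPath hp]

theorem im_deriv_powerPath (hp : 1 ≤ p) (z : ℂ) (t : ℝ) :
    (deriv (powerPath p z) t).im = -(p * (1 - t) ^ (p - 1) * z.im) := by
  simp [deriv_powerPath hp]

theorem stretch_powerPath (hm : 0 < m) (hmM : m ≤ M) (ht : t < 1) (z : ℂ) :
    stretch m M (powerPath (M / m) z t) = -(m * (1 - t)) • deriv (powerPath (M / m) z) t := by
  have hp : 1 ≤ M / m := (one_le_div hm).2 hmM
  have hrpow : (1 - t) ^ (M / m) = (1 - t) * (1 - t) ^ (M / m - 1) := by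
    rw [rpow_sub_one (sub_pos.2 ht).ne', mul_div_cancel₀ _ (sub_pos.2 ht).ne']
  apply Complex.ext
  · rw [stretch, re_powerPath, Complex.smul_re, re_deriv_powerPath hp, smul_eq_mul]
    ring
  · rw [stretch, im_powerPath, Complex.smul_im, im_deriv_powerPath hp, smul_eq_mul, hrpow]
    field_simp

theorem hasDerivAt_mul_re_sq_add_mul_im_sq (hf : DifferentiableAt ℝ f t) (m M : ℝ) :
    HasDerivAt (fun s => m * (f s).re ^ 2 + M * (f s).im ^ 2)
      (2 * inner ℝ (stretch m M (f t)) (deriv f t)) t := by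
  have hre : HasDerivAt (fun s => (f s).re) (deriv f t).re t :=
    Complex.reCLM.hasFDerivAt.comp_hasDerivAt t hf.hasDerivAt
  have him : HasDerivAt (fun s => (f s).im) (deriv f t).im t :=
    Complex.imCLM.hasFDerivAt.comp_hasDerivAt t hf.hasDerivAt
  refine (((hre.fun_pow 2).const_mul m).add ((him.fun_pow 2).const_mul M)).congr_deriv ?_
  simp only [stretch, Complex.inner, Complex.mul_re, Complex.conj_re, Complex.conj_im,
    Nat.cast_ofNat, Nat.add_one_sub_one, pow_one]
  ring

theorem degDist_zero_le_half_mul (hW : Continuous W) (hm : 0 < m) (hmM : m ≤ M)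
    (hWA : ∀ w, ‖w‖ ≤ ‖z‖ → √2 * √(W w) ≤ A * ‖stretch m M w‖) :
    degDist W z 0 ≤ A / 2 * (m * z.re ^ 2 + M * z.im ^ 2) := by
  have hp : 1 ≤ M / m := (one_le_div hm).2 hmM
  have hγ := contDiff_powerPath hp z
  set γ := powerPath (M / m) z
  have hγ0 : γ 0 = z := powerPath_zero _ z
  have hγ1 : γ 1 = 0 := powerPath_one (by positivity) z
  have hderiv (t : ℝ) := (hasDerivAt_mul_re_sq_add_mul_im_sq
    (hγ.differentiable one_ne_zero t) m M).const_mul (-(A / 2))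
  have hspeed (t : ℝ) (ht : t ∈ Set.Ioo 0 1) : √2 * √(W (γ t)) * ‖deriv γ t‖ ≤
      -(A / 2) * (2 * inner ℝ (stretch m M (γ t)) (deriv γ t)) := by
    have hdens := hWA _ (norm_powerPath_le (zero_le_one.trans hp) (Set.Ioo_subset_Icc_self ht) z)
    have hc : 0 ≤ m * (1 - t) := mul_nonneg hm.le (sub_nonneg.2 ht.2.le)
    rw [stretch_powerPath hm hmM ht.2] at hdens ⊢
    calc √2 * √(W (γ t)) * ‖deriv γ t‖
        ≤ A * ‖-(m * (1 - t)) • deriv γ t‖ * ‖deriv γ t‖ := by gcongr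
      _ = _ := by
        rw [norm_smul, norm_neg, Real.norm_of_nonneg hc, real_inner_smul_left,
          real_inner_self_eq_norm_sq]
        ring
  have hlen : degLength W γ 0 1 ≤ _ := intervalIntegral.integral_le_sub_of_hasDeriv_right_of_le
    zero_le_one (fun t _ => (hderiv t).continuousAt.continuousWithinAt)
    (fun t _ => (hderiv t).hasDerivWithinAt)
    (continuous_degLength_integrand hW hγ).integrableOn_Icc hspeed
  simp only [hγ0, hγ1, Complex.zero_re, Complex.zero_im] at hlen
  have := degDist_le_degLength_zero_one (W := W) hγ
  rw [hγ0, hγ1] at this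
  linarith

end ModelGeodesic

section Taylor

variable {E F : Type*} [NormedAddCommGroup E] [NormedSpace ℝ E] [NormedAddCommGroup F]
  [NormedSpace ℝ F] {f : E → F} {x : E}

theorem taylor_two_isLittleO (hf : ContDiffAt ℝ 2 f x) :
    (fun y => f y - (f x + fderiv ℝ f x (y - x) +
      (1 / 2 : ℝ) • iteratedFDeriv ℝ 2 f x ![y - x, y - x])) =o[𝓝 x] fun y => ‖y - x‖ ^ 2 := by
  have hf'_diff : DifferentiableAt ℝ (fderiv ℝ f) x :=
    (hf.fderiv_right (m := 1) le_rfl).differentiableAt one_ne_zero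
  have hsymm : IsSymmSndFDerivAt ℝ f x := hf.isSymmSndFDerivAt (by simp)
  obtain ⟨ρ, hρ, hball⟩ := Metric.eventually_nhds_iff_ball.1 (hf.eventually (by simp))
  let D := fderiv ℝ (fderiv ℝ f) x
  let g (y : E) : F := f y - fderiv ℝ f x (y - x) - (1 / 2 : ℝ) • D (y - x) (y - x)
  have hg (y : E) (hy : y ∈ Metric.ball x ρ) :
      HasFDerivAt g (fderiv ℝ f y - fderiv ℝ f x - D (y - x)) y := by
    have hsub : HasFDerivAt (fun y => y - x) (ContinuousLinearMap.id ℝ E) y :=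
      (hasFDerivAt_id y).sub_const x
    have hquad := (D.hasFDerivAt.comp y hsub).clm_apply hsub
    refine ((((hball y hy).differentiableAt two_ne_zero).hasFDerivAt.sub
      ((fderiv ℝ f x).hasFDerivAt.comp y hsub)).sub
        (hquad.const_smul (1 / 2 : ℝ))).congr_fderiv ?_
    ext v
    change fderiv ℝ f y v - fderiv ℝ f x v - (1 / 2 : ℝ) • (D (y - x) v + D v (y - x)) =
      fderiv ℝ f y v - fderiv ℝ f x v - D (y - x) v
    have hsymm_v : D v (y - x) = D (y - x) v := hsymm.eq v (y - x)
    rw [hsymm_v]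
    module
  have hg' : (fun y => fderiv ℝ f y - fderiv ℝ f x - D (y - x)) =o[𝓝[Metric.ball x ρ] x]
      fun y => ‖y - x‖ ^ 1 := by
    simpa using hf'_diff.hasFDerivAt.isLittleO.norm_right.mono nhdsWithin_le_nhds
  have := (convex_ball x ρ).isLittleO_pow_succ (Metric.mem_ball_self hρ)
    (fun y hy => (hg y hy).hasFDerivWithinAt) hg'
  rw [Metric.isOpen_ball.nhdsWithin_eq (Metric.mem_ball_self hρ)] at this
  refine this.congr_left fun y => ?_
  simp only [g, D, iteratedFDeriv_two_apply, sub_self, map_zero, smul_zero, sub_zero,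
    Matrix.cons_val_zero, Matrix.cons_val_one]
  abel

theorem isLittleO_sub_of_iteratedFDeriv_two_eq {W q : E → ℝ} (hW : ContDiffAt ℝ 2 W 0)
    (hmin : IsLocalMin W 0) (hW0 : W 0 = 0)
    (hq : ∀ v, iteratedFDeriv ℝ 2 W 0 ![v, v] = 2 * q v) :
    (fun z => W z - q z) =o[𝓝 0] fun z => ‖z‖ ^ 2 := by
  simpa [hW0, hq, hmin.fderiv_eq_zero] using taylor_two_isLittleO hW

end Taylor

section Crossing

variable {W : ℂ → ℝ} {f : ℝ → ℂ} {z : ℂ} {a b ε r l k L m M δ η : ℝ}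

theorem exists_mul_norm_stretch_le_of_isLittleO (hW : ∀ z, 0 ≤ W z) (hm : 0 < m) (hmM : m ≤ M)
    (hδ : 0 < δ) (hδ1 : δ < 1)
    (hT : (fun z => W z - ‖stretch m M z‖ ^ 2 / 2) =o[𝓝 0] fun z => ‖z‖ ^ 2) :
    ∃ r > 0, ∀ z, ‖z‖ ≤ r → (1 - δ) * ‖stretch m M z‖ ≤ √2 * √(W z) ∧
      √2 * √(W z) ≤ (1 + δ) * ‖stretch m M z‖ := by
  obtain ⟨r, hr, hball⟩ := Metric.nhds_basis_closedBall.eventually_iff.1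
    (hT.def (c := δ * m ^ 2 / 2) (by positivity))
  refine ⟨r, hr, fun z hz => ?_⟩
  have hsq : |W z - ‖stretch m M z‖ ^ 2 / 2| ≤ δ / 2 * ‖stretch m M z‖ ^ 2 :=
    calc |W z - ‖stretch m M z‖ ^ 2 / 2| ≤ δ / 2 * (m * ‖z‖) ^ 2 := by
          simpa [mul_pow, mul_div_right_comm, mul_assoc] using
            hball (mem_closedBall_zero_iff.2 hz)
      _ ≤ δ / 2 * ‖stretch m M z‖ ^ 2 := by
          gcongr
          exact mul_norm_le_norm_stretch hm.le hmM z
  rw [abs_le] at hsq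
  have hδ_sq : 0 ≤ δ * (1 - δ) := mul_nonneg hδ.le (sub_nonneg.2 hδ1.le)
  constructor <;> refine le_of_sq_le_sq ?_ (by positivity) <;>
    rw [sqrt_two_mul_sqrt_sq (hW z), mul_pow] <;>
    nlinarith [mul_nonneg hδ_sq (sq_nonneg ‖stretch m M z‖),
      mul_nonneg hδ.le (sq_nonneg ‖stretch m M z‖)]

/-- On the ball of radius `r` about the well `0`, the conformal factor `√2 √W` lies between `l ‖z‖`
and `L ‖z‖`, and outside the sector `|y| ≤ ε |x|` it is at least `k ‖z‖`. By the last field `k` is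
so large that a curve gains nothing by leaving the sector on its way to the well. -/
structure SlowWell (W : ℂ → ℝ) (ε r l k L : ℝ) : Prop where
  continuous : Continuous W
  nonneg (z : ℂ) : 0 ≤ W z
  radius_pos : 0 < r
  lower_pos : 0 < l
  steep_pos : 0 < k
  upper_pos : 0 < L
  lower_mul_norm_le (z : ℂ) (hz : ‖z‖ ≤ r) : l * ‖z‖ ≤ √2 * √(W z)
  le_upper_mul_norm (z : ℂ) (hz : ‖z‖ ≤ r) : √2 * √(W z) ≤ L * ‖z‖
  steep_mul_norm_le (z : ℂ) (hz : ‖z‖ ≤ r) (hsteep : ε * |z.re| ≤ |z.im|) :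
    k * ‖z‖ ≤ √2 * √(W z)
  degDist_zero_le (z : ℂ) (hz : ‖z‖ ≤ r) : degDist W z 0 ≤ L / 2 * ‖z‖ ^ 2
  degDist_zero_le_of_edge (z : ℂ) (hz : ‖z‖ ≤ r) (hedge : |z.im| = ε * |z.re|) :
    degDist W z 0 ≤ k / 2 * ‖z‖ ^ 2

theorem slowWell_of_norm_stretch_bounds {A B μ : ℝ} (hWc : Continuous W) (hW : ∀ z, 0 ≤ W z)
    (hm : 0 < m) (hmM : m ≤ M) (hr : 0 < r) (hA : 0 < A) (hB : 0 < B) (hμ : 0 < μ)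
    (hAW : ∀ z, ‖z‖ ≤ r → A * ‖stretch m M z‖ ≤ √2 * √(W z))
    (hWB : ∀ z, ‖z‖ ≤ r → √2 * √(W z) ≤ B * ‖stretch m M z‖)
    (hsteep : ∀ z : ℂ, ε * |z.re| ≤ |z.im| → μ * ‖z‖ ≤ ‖stretch m M z‖)
    (hedge : ∀ z : ℂ, |z.im| = ε * |z.re| →
      B * (m * z.re ^ 2 + M * z.im ^ 2) ≤ A * μ * ‖z‖ ^ 2) :
    SlowWell W ε r (A * m) (A * μ) (B * M) :=
  have hM : 0 < M := hm.trans_le hmM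
  have hdist (z : ℂ) (hz : ‖z‖ ≤ r) :
      degDist W z 0 ≤ B / 2 * (m * z.re ^ 2 + M * z.im ^ 2) :=
    degDist_zero_le_half_mul hWc hm hmM fun w hw => hWB w (hw.trans hz)
  { continuous := hWc
    nonneg := hW
    radius_pos := hr
    lower_pos := mul_pos hA hm
    steep_pos := mul_pos hA hμ
    upper_pos := mul_pos hB hM
    lower_mul_norm_le := fun z hz =>
      calc A * m * ‖z‖ = A * (m * ‖z‖) := mul_assoc _ _ _
        _ ≤ A * ‖stretch m M z‖ := by gcongr; exact mul_norm_le_norm_stretch hm.le hmM z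
        _ ≤ √2 * √(W z) := hAW z hz
    le_upper_mul_norm := fun z hz =>
      calc √2 * √(W z) ≤ B * ‖stretch m M z‖ := hWB z hz
        _ ≤ B * (M * ‖z‖) := by gcongr; exact norm_stretch_le_mul_norm hm.le hmM z
        _ = B * M * ‖z‖ := (mul_assoc _ _ _).symm
    steep_mul_norm_le := fun z hz hz_steep =>
      calc A * μ * ‖z‖ = A * (μ * ‖z‖) := mul_assoc _ _ _
        _ ≤ A * ‖stretch m M z‖ := by gcongr; exact hsteep z hz_steep
        _ ≤ √2 * √(W z) := hAW z hz
    degDist_zero_le := fun z hz =>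
      calc degDist W z 0 ≤ B / 2 * (m * z.re ^ 2 + M * z.im ^ 2) := hdist z hz
        _ ≤ B / 2 * (M * z.re ^ 2 + M * z.im ^ 2) := by gcongr
        _ = B * M / 2 * ‖z‖ ^ 2 := by
          rw [norm_sq_eq_re_sq_add_im_sq]
          ring
    degDist_zero_le_of_edge := fun z hz hz_edge => by
      linarith [hdist z hz, hedge z hz_edge] }

theorem exists_one_add_mul_eq_one_sub_mul {ν μ : ℝ} (hν : 0 < ν) (hνμ : ν < μ) :
    ∃ δ, 0 < δ ∧ δ < 1 ∧ (1 + δ) * ν = (1 - δ) * μ := by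
  have hμ : 0 < μ := hν.trans hνμ
  refine ⟨(μ - ν) / (μ + ν), div_pos (sub_pos.2 hνμ) (by positivity), ?_, ?_⟩
  · rw [div_lt_one (by positivity)]
    linarith
  · field_simp
    ring

theorem exists_slowWell (hWc : Continuous W) (hW : ∀ z, 0 ≤ W z) (hm : 0 < m) (hmM : m < M)
    (hε : 0 < ε) (hT : (fun z => W z - ‖stretch m M z‖ ^ 2 / 2) =o[𝓝 0] fun z => ‖z‖ ^ 2) :
    ∃ r l k L, SlowWell W ε r l k L := by
  have hM : 0 < M := hm.trans hmM
  have hνμ := weighted_mean_lt_sqrt_weighted_mean_sq hm hmM hε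
  have hν : 0 < (m + M * ε ^ 2) / (1 + ε ^ 2) := by positivity
  -- `δ` is the error at which the two bounds on the edge of the sector meet.
  obtain ⟨δ, hδ, hδ1, hδ_eq⟩ := exists_one_add_mul_eq_one_sub_mul hν hνμ
  obtain ⟨r, hr, hball⟩ := exists_mul_norm_stretch_le_of_isLittleO hW hm hmM.le hδ hδ1 hT
  refine ⟨r, _, _, _, slowWell_of_norm_stretch_bounds hWc hW hm hmM.le hr (sub_pos.2 hδ1)
    (add_pos one_pos hδ) (hν.trans hνμ) (fun z hz => (hball z hz).1) (fun z hz => (hball z hz).2)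
    (fun z => sqrt_mul_norm_le_norm_stretch hm.le hmM.le hε.le) fun z hz => ?_⟩
  rw [mul_re_sq_add_mul_im_sq_eq_of_abs_im_eq m M hz, ← mul_assoc, hδ_eq]

namespace SlowWell

theorem degDist_add_le_degLength_of_re_eq_zero (h : SlowWell W ε r l k L) (hε : ε ^ 2 ≤ 1)
    (hf : ContDiff ℝ 1 f) (hab : a ≤ b) (hfr : ∀ t ∈ Set.Icc a b, ‖f t‖ ≤ r)
    (ha : |(f a).im| ≤ ε * |(f a).re|) (hb : (f b).re = 0) :
    degDist W (f a) 0 + k / 2 * ((1 - ε ^ 2) / (1 + ε ^ 2) * ‖f b‖ ^ 2) ≤ degLength W f a b := by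
  have hf_cont := hf.continuous
  have hk := h.steep_pos
  set θ := (1 - ε ^ 2) / (1 + ε ^ 2) with hθ
  have hθ0 : 0 ≤ θ := div_nonneg (sub_nonneg.2 hε) (by positivity)
  have hθ1 : θ ≤ 1 := by
    rw [hθ, div_le_one (by positivity)]
    linarith [sq_nonneg ε]
  obtain ⟨s, hs, hs0, hpos⟩ := exists_eq_zero_and_forall_pos
    (h := fun t => |(f t).im| - ε * |(f t).re|) hab (by fun_prop) (sub_nonpos.2 ha) (by simp [hb])
  have hedge : |(f s).im| = ε * |(f s).re| := sub_eq_zero.1 hs0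
  have hedge_sq : θ * ‖f s‖ ^ 2 ≤ (f s).re ^ 2 - (f s).im ^ 2 := by
    have him : (f s).im ^ 2 = ε ^ 2 * (f s).re ^ 2 := by
      rw [← sq_abs, hedge, mul_pow, sq_abs]
    rw [norm_sq_eq_re_sq_add_im_sq, him, hθ, div_mul_eq_mul_div, div_le_iff₀ (by positivity)]
    linarith
  have houter := degDist_le_degLength h.continuous hf hs.1
  have hinner : k / 2 * ‖f s‖ ^ 2 + k / 2 * (θ * ‖f b‖ ^ 2) ≤ degLength W f s b :=
    calc k / 2 * ‖f s‖ ^ 2 + k / 2 * (θ * ‖f b‖ ^ 2)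
        = k / 2 * (‖f s‖ ^ 2 + θ * ‖f b‖ ^ 2) := by ring
      _ ≤ k / 2 * ‖f b ^ 2 - f s ^ 2‖ := by
        gcongr
        exact norm_sq_add_mul_norm_sq_le_norm_sq_sub_sq hθ0 hθ1 hb hedge_sq
      _ ≤ degLength W f s b :=
        half_mul_norm_sq_sub_sq_le_degLength h.continuous hf hs.2 hk.le fun t ht =>
          h.steep_mul_norm_le _ (hfr t ⟨hs.1.trans ht.1.le, ht.2.le⟩) (sub_pos.1 (hpos t ht)).le
  linarith [degDist_triangle h.continuous (f a) (f s) 0, degLength_add h.continuous hf a s b,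
    h.degDist_zero_le_of_edge _ (hfr s hs) hedge]

theorem exists_degDist_add_degDist_add_le_degLength (h : SlowWell W ε r l k L) (hε : ε ^ 2 ≤ 1)
    (hf : ContDiff ℝ 1 f) (hab : a ≤ b) (hfr : ∀ t ∈ Set.Icc a b, ‖f t‖ ≤ r)
    (ha : |(f a).im| ≤ ε * |(f a).re|) (hb : |(f b).im| ≤ ε * |(f b).re|)
    (ha_neg : (f a).re ≤ 0) (hb_pos : 0 ≤ (f b).re) :
    ∃ τ ∈ Set.Icc a b, degDist W (f a) 0 + degDist W (f b) 0 +
      k * ((1 - ε ^ 2) / (1 + ε ^ 2)) * ‖f τ‖ ^ 2 ≤ degLength W f a b := by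
  have hf_cont := hf.continuous
  obtain ⟨τ, hτ, hτ0⟩ := intermediate_value_Icc hab
    (f := fun t => (f t).re) (by fun_prop) ⟨ha_neg, hb_pos⟩
  refine ⟨τ, hτ, ?_⟩
  have hleft := h.degDist_add_le_degLength_of_re_eq_zero hε hf hτ.1
    (fun t ht => hfr t ⟨ht.1, ht.2.trans hτ.2⟩) ha hτ0
  have hright := h.degDist_add_le_degLength_of_re_eq_zero (f := fun t => f (-t)) (a := -b)
    (b := -τ) hε (hf.comp contDiff_neg) (neg_le_neg hτ.2)
    (fun t ht => hfr (-t) ⟨by linarith [hτ.1, ht.2], by linarith [ht.1]⟩)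
    (by simpa using hb) (by simpa using hτ0)
  rw [degLength_comp_neg] at hright
  simp only [neg_neg] at hright
  linarith [degLength_add h.continuous hf a τ b]

theorem norm_lt_half_radius (h : SlowWell W ε r l k L) (hz : degDist W z 0 < l * r ^ 2 / 8) :
    ‖z‖ < r / 2 := by
  by_contra! hcon
  have hr := h.radius_pos
  have := half_mul_sq_le_degDist_zero h.continuous h.lower_pos.le (half_pos hr).le
    (fun w hw => h.lower_mul_norm_le w (hw.trans (half_le_self hr.le))) hcon
  linarith

theorem le_degLength_of_radius_le_norm (h : SlowWell W ε r l k L) (hf : ContDiff ℝ 1 f) {t : ℝ}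
    (ht : t ∈ Set.Icc a b) (hft : r ≤ ‖f t‖) (hb : ‖f b‖ ≤ r / 2) :
    3 * l * r ^ 2 / 8 ≤ degLength W f a b := by
  have hl := h.lower_pos
  have hr := h.radius_pos
  calc 3 * l * r ^ 2 / 8 = l / 2 * (r ^ 2 - (r / 2) ^ 2) := by ring
    _ ≤ l / 2 * (r ^ 2 - ‖f b‖ ^ 2) := by gcongr
    _ ≤ degLength W f t b := half_mul_sq_sub_norm_sq_le_degLength h.continuous hf ht.2 hl.le
        h.lower_mul_norm_le hft (hb.trans (half_le_self hr.le))
    _ ≤ degLength W f a b := degLength_le_of_Icc_subset h.continuous hf ht.1 le_rfl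

theorem exists_energy_excess_of_norm_le (h : SlowWell W ε r l k L) (hε : ε ^ 2 < 1)
    (hη : 0 < η) : ∃ c > 0, ∀ (f : ℝ → ℂ) (a b : ℝ), ContDiff ℝ 1 f → a ≤ b →
      (∀ t ∈ Set.Icc a b, ‖f t‖ ≤ r) → η ≤ degDist W (f a) 0 → η ≤ degDist W (f b) 0 →
      |(f a).im| ≤ ε * |(f a).re| → |(f b).im| ≤ ε * |(f b).re| →
      (f a).re ≤ 0 → 0 ≤ (f b).re →
      ∃ τ ∈ Set.Icc a b,
        2 * η + c * (‖f τ‖ ^ 2 + exp (-(3 * L * (b - a)))) ≤ oneDEnergy W f a b := by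
  have hL := h.upper_pos
  have hq : 0 < k * ((1 - ε ^ 2) / (1 + ε ^ 2)) :=
    mul_pos h.steep_pos (div_pos (sub_pos.2 hε) (by positivity))
  set q := k * ((1 - ε ^ 2) / (1 + ε ^ 2)) with hq_def
  refine ⟨q * η / (q + η + L), by positivity,
    fun f a b hf hab hfr hda hdb ha hb ha_neg hb_pos => ?_⟩
  obtain ⟨τ, hτ, hlen⟩ := h.exists_degDist_add_degDist_add_le_degLength hε.le hf hab hfr ha hb
    ha_neg hb_pos
  refine ⟨τ, hτ, ?_⟩
  rw [← hq_def] at hlen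
  have hP_nonneg := sub_nonneg.2 (degLength_le_oneDEnergy h.continuous h.nonneg hf hab)
  have hstart : η ≤ L / 2 * ‖f a‖ ^ 2 :=
    hda.trans (h.degDist_zero_le _ (hfr a (Set.left_mem_Icc.2 hab)))
  have hgronwall := exp_neg_mul_norm_sq_le h.continuous h.nonneg hf hL hτ
    fun s hs => h.le_upper_mul_norm _ (hfr s hs)
  set X := exp (-(3 * L * (b - a)))
  set P := oneDEnergy W f a b - degLength W f a b
  have hexp : η * X ≤ L / 2 * ‖f τ‖ ^ 2 + P :=
    calc η * X ≤ L / 2 * (X * ‖f a‖ ^ 2) := by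
          nlinarith [mul_le_mul_of_nonneg_right hstart (exp_pos _ : 0 < X).le]
      _ ≤ L / 2 * (‖f τ‖ ^ 2 + 2 / L * P) := by gcongr
      _ = L / 2 * ‖f τ‖ ^ 2 + P := by field_simp
  have hexcess : q * η / (q + η + L) * (‖f τ‖ ^ 2 + X) ≤ q * ‖f τ‖ ^ 2 + P := by
    rw [div_mul_eq_mul_div, div_le_iff₀ (by positivity)]
    calc q * η * (‖f τ‖ ^ 2 + X) = q * (η * ‖f τ‖ ^ 2) + q * (η * X) := by ring
      _ ≤ q * (η * ‖f τ‖ ^ 2) + q * (L / 2 * ‖f τ‖ ^ 2 + P) := by gcongr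
      _ ≤ (q * ‖f τ‖ ^ 2 + P) * (q + η + L) := by
        have : 0 ≤ q * (q + L / 2) * ‖f τ‖ ^ 2 + (η + L) * P := by positivity
        linarith
  linarith

theorem energy_excess_of_radius_le_norm (h : SlowWell W ε r l k L) (hf : ContDiff ℝ 1 f) {t : ℝ}
    (ht : t ∈ Set.Icc a b) (hft : r ≤ ‖f t‖) (hb : ‖f b‖ ≤ r / 2) :
    l * r ^ 2 / 8 + l * r ^ 2 / (r ^ 2 + 4) * (‖f b‖ ^ 2 + exp (-(3 * L * (b - a)))) ≤
      oneDEnergy W f a b := by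
  have hl := h.lower_pos
  have hL := h.upper_pos
  have hab : a ≤ b := ht.1.trans ht.2
  have hexp_le : exp (-(3 * L * (b - a))) ≤ 1 :=
    exp_le_one_iff.2 (neg_nonpos.2 (mul_nonneg (by positivity) (sub_nonneg.2 hab)))
  calc _ ≤ l * r ^ 2 / 8 + l * r ^ 2 / (r ^ 2 + 4) * ((r / 2) ^ 2 + 1) := by gcongr
    _ = 3 * l * r ^ 2 / 8 := by
      field_simp
      ring
    _ ≤ degLength W f a b := h.le_degLength_of_radius_le_norm hf ht hft hb
    _ ≤ oneDEnergy W f a b := degLength_le_oneDEnergy h.continuous h.nonneg hf hab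

theorem exists_energy_excess (h : SlowWell W ε r l k L) (hε : ε ^ 2 < 1) :
    ∃ η > 0, ∃ c > 0, ∀ (f : ℝ → ℂ) (a b : ℝ), ContDiff ℝ 1 f → a ≤ b →
      degDist W (f a) 0 = η → degDist W (f b) 0 = η →
      |(f a).im| ≤ ε * |(f a).re| → |(f b).im| ≤ ε * |(f b).re| →
      (f a).re ≤ 0 → 0 ≤ (f b).re →
      2 * η + c * (sInf ((fun t => ‖f t‖ ^ 2) '' Set.Icc a b) + exp (-(3 * L * (b - a)))) ≤
        oneDEnergy W f a b := by
  have hl := h.lower_pos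
  have hr := h.radius_pos
  have hη : 0 < l * r ^ 2 / 16 := by positivity
  obtain ⟨c, hc, hnear⟩ := h.exists_energy_excess_of_norm_le hε hη
  refine ⟨l * r ^ 2 / 16, hη, min c (l * r ^ 2 / (r ^ 2 + 4)), by positivity,
    fun f a b hf hab hda hdb ha hb ha_neg hb_pos => ?_⟩
  have hinf_nonneg : 0 ≤ sInf ((fun t => ‖f t‖ ^ 2) '' Set.Icc a b) :=
    Real.sInf_nonneg (Set.forall_mem_image.2 fun t _ => sq_nonneg _)
  have hinf {t : ℝ} (ht : t ∈ Set.Icc a b) :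
      sInf ((fun t => ‖f t‖ ^ 2) '' Set.Icc a b) ≤ ‖f t‖ ^ 2 :=
    csInf_le ⟨0, Set.forall_mem_image.2 fun t _ => sq_nonneg _⟩ (Set.mem_image_of_mem _ ht)
  by_cases hfr : ∀ t ∈ Set.Icc a b, ‖f t‖ ≤ r
  · obtain ⟨τ, hτ, hexcess⟩ := hnear f a b hf hab hfr hda.ge hdb.ge ha hb ha_neg hb_pos
    refine le_trans ?_ hexcess
    gcongr
    · exact min_le_left _ _
    · exact hinf hτ
  · push Not at hfr
    obtain ⟨t, ht, hft⟩ := hfr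
    have hfb : ‖f b‖ < r / 2 := h.norm_lt_half_radius (by linarith)
    refine le_trans ?_ (h.energy_excess_of_radius_le_norm hf ht hft.le hfb.le)
    gcongr
    · linarith
    · exact min_le_right _ _
    · exact hinf (Set.right_mem_Icc.2 hab)

end SlowWell

end Crossing

theorem crossing_energy_excess_general (W : ℂ → ℝ) (hWc : Continuous W) (hW : ∀ q, 0 ≤ W q)
    (lam1 lam2 : ℝ) (h1 : 0 < lam1) (h12 : lam1 < lam2)
    (hT : (fun z => W z - (lam1 * z.re ^ 2 + lam2 * z.im ^ 2)) =o[𝓝 0] fun z => ‖z‖ ^ 2)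
    (ε : ℝ) (hε : 0 < ε) (hε1 : ε < 1) :
    ∃ η > (0:ℝ), ∃ c > (0:ℝ), ∃ C > (0:ℝ),
      ∀ R > (0:ℝ), ∀ f : ℝ → ℂ, ContDiff ℝ 1 f →
        ∀ a b : ℂ, f (-R) = a → f R = b →
          degDist W a 0 = η → degDist W b 0 = η →
          a.re < 0 → 0 < b.re → |a.im| ≤ ε * |a.re| → |b.im| ≤ ε * |b.re| →
          2 * η + c * (sInf ((fun t => ‖f t‖ ^ 2) '' Set.Icc (-R) R) +
              Real.exp (-C * R)) ≤ oneDEnergy W f (-R) R := by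
  have hmodel (z : ℂ) : ‖stretch √(2 * lam1) √(2 * lam2) z‖ ^ 2 / 2 =
      lam1 * z.re ^ 2 + lam2 * z.im ^ 2 := by
    rw [norm_stretch_sq, sq_sqrt (by linarith), sq_sqrt (by linarith)]
    ring
  obtain ⟨r, l, k, L, hwell⟩ := exists_slowWell (m := √(2 * lam1)) (M := √(2 * lam2)) hWc hW
    (sqrt_pos.2 (by linarith)) (sqrt_lt_sqrt (by linarith) (by linarith)) hε
    (by simpa only [hmodel] using hT)
  obtain ⟨η, hη, c, hc, hexcess⟩ := hwell.exists_energy_excess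
    (pow_lt_one₀ hε.le hε1 two_ne_zero)
  refine ⟨η, hη, c, hc, 6 * L, mul_pos (by norm_num) hwell.upper_pos, ?_⟩
  rintro R hR f hf _ _ rfl rfl hda hdb ha_neg hb_pos ha hb
  convert hexcess f (-R) R hf (by linarith) hda hdb ha hb ha_neg.le hb_pos.le using 5
  ring

/-- Lemma 3.2 ("lem21"): a curve crossing the well `0` from left to right, entering and
exiting at geodesic distance `η` nearly along the slow eigendirection, pays strictly more
than `2η`, with excess controlled by the square of its minimal distance to the well plus
an exponentially small term. -/
theorem crossing_energy_excess (W : ℂ → ℝ) (hWreg : ContDiff ℝ 2 W)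
    (hW : ∀ q, 0 ≤ W q) (hW0 : W 0 = 0)
    (lam1 lam2 : ℝ) (h1 : 0 < lam1) (h12 : lam1 < lam2)
    (hHess : ∀ v : ℂ, iteratedFDeriv ℝ 2 W 0 ![v, v] =
      2 * lam1 * v.re ^ 2 + 2 * lam2 * v.im ^ 2) :
    ∃ η > (0:ℝ), ∃ ε > (0:ℝ), ∃ c > (0:ℝ), ∃ C > (0:ℝ),
      ∀ R > (0:ℝ), ∀ f : ℝ → ℂ, ContDiff ℝ 1 f →
        ∀ a b : ℂ, f (-R) = a → f R = b →
          degDist W a 0 = η → degDist W b 0 = η →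
          a.re < 0 → 0 < b.re → |a.im| ≤ ε * |a.re| → |b.im| ≤ ε * |b.re| →
          2 * η + c * (sInf ((fun t => ‖f t‖ ^ 2) '' Set.Icc (-R) R) +
              Real.exp (-C * R)) ≤ oneDEnergy W f (-R) R := by
  have hmin : IsLocalMin W 0 := Eventually.of_forall fun z => hW0 ▸ hW z
  have hT := isLittleO_sub_of_iteratedFDeriv_two_eq hWreg.contDiffAt hmin hW0
    (q := fun z => lam1 * z.re ^ 2 + lam2 * z.im ^ 2) fun v => (hHess v).trans (by ring)
  obtain ⟨η, hη, hexcess⟩ := crossing_energy_excess_general W hWreg.continuous hW lam1 lam2 h1 h12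
    hT (1 / 2) (by norm_num) (by norm_num)
  exact ⟨η, hη, 1 / 2, by norm_num, hexcess⟩
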